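/- Let F_n be a free group of finite rank n with free basis {x_1, …, x_n}, and let φ : F_n → F_n be an endomorphism satisfying φ(x_i) = x_i for i = 1, …, n−1 (φ(x_n) arbitrary). Then the image H = φ(F_n) is inert in F_n; that is, rk(H ∩ G) ≤ rk(G) for every finitely generated subgroup G of F_n. -/

import Mathlib

/-- The rank of a subgroup: the minimal cardinality of a generating set.
For subgroups of free groups (which are free by Nielsen–Schreier) this is the
cardinality of a free basis. -/
noncomputable def rk {G : Type*} [Group G] (H : Subgroup G) : Cardinal :=
  ⨅ S : {S : Set G // Subgroup.closure S = H}, Cardinal.mk S.1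

/-- A subgroup `H` is inert if `rk (H ⊓ K) ≤ rk K` for every finitely generated `K`. -/
def IsInert {G : Type*} [Group G] (H : Subgroup G) : Prop :=
  ∀ K : Subgroup G, K.FG → rk (H ⊓ K) ≤ rk K

/-- `stage x i` is the subgroup generated by the first `i` elements of `x`. -/
def stage {n : ℕ} {F : Type*} [Group F] (x : Fin n → F) (i : ℕ) : Subgroup F :=
  Subgroup.closure (x '' {j | (j : ℕ) < i})

/-- `x` is an ordered free basis of `F`. -/
def IsOrderedBasis {n : ℕ} {F : Type*} [Group F] (x : Fin n → F) : Prop :=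
  Function.Bijective (FreeGroup.lift x)

/-- `H` is in echelon form with respect to the ordered basis `x`:
`rk (H ⊓ F_i) ≤ rk (H ⊓ F_{i-1}) + 1` for `i = 1, …, n`. -/
def InEchelonForm {n : ℕ} {F : Type*} [Group F] (x : Fin n → F) (H : Subgroup F) : Prop :=
  ∀ i : ℕ, i < n → rk (H ⊓ stage x (i + 1)) ≤ rk (H ⊓ stage x i) + 1

/-- `H` is an echelon subgroup: it is in echelon form with respect to
some ordered free basis. -/
def IsEchelon {n : ℕ} (H : Subgroup (FreeGroup (Fin n))) : Prop :=
  ∃ x : Fin n → FreeGroup (Fin n), IsOrderedBasis x ∧ InEchelonForm x H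

/-- A 1-generator (subgroup) endomorphism: an endomorphism fixing all but (possibly)
one member of some set of free generators. -/
def IsOneGenEndo {G : Type*} [Group G] (φ : G →* G) : Prop :=
  ∃ (ι : Type) (b : FreeGroupBasis ι G) (s : Set ι),
    s.Subsingleton ∧ ∀ i ∉ s, φ (b i) = b i

/-- The subgroup of points fixed by an endomorphism. -/
def fixedSubgroup {G : Type*} [Group G] (φ : G →* G) : Subgroup G where
  carrier := {g | φ g = g}
  one_mem' := by simp
  mul_mem' := by intro a b ha hb; simp only [Set.mem_setOf_eq, map_mul] at *; rw [ha, hb]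
  inv_mem' := by intro a ha; simp only [Set.mem_setOf_eq, map_inv] at *; rw [ha]

/-- An element is primitive if it belongs to some free basis. -/
def IsPrimitive {n : ℕ} (g : FreeGroup (Fin n)) : Prop :=
  ∃ x : Fin n → FreeGroup (Fin n), IsOrderedBasis x ∧ ∃ j, x j = g

/-!
A crossed homomorphism `Θ` of `F` into the `R`-linear maps out of `R[F ⧸ K]`, where `R` is a ring
with the strong rank condition receiving a homomorphism from `F`, can be evaluated at the base
point. On a free basis of `ψ⁻¹ K`, for `ψ : H →* F` with `H` free, the values are linearly
independent as soon as the Jacobian of `Θ ∘ ψ` is injective: Shapiro's lemma provides dual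
functionals. On the other hand they lie in the span of the values at any generating set of `K`.
Hence `rk (ψ.range ⊓ K) ≤ rk K`.

For the free differential of `F` and an endomorphism moving only the basis element `xₗ`, the
Jacobian is injective as soon as the operator given by the Fox derivative `∂φ(xₗ)/∂xₗ` is. This
derivative vanishes only if `φ(xₗ)` avoids `xₗ`, in which case the image is a free factor.
Otherwise choose a finite product `Q` of integral unitriangular groups into which the support of
`∂φ(xₗ)/∂xₗ` injects, and take `R = ℤ[Q]`. Unique products in `Q` make the operator injective, and
polynomial growth of `Q` gives the strong rank condition.
-/

section PolynomialGrowth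

/-- A group has polynomial growth if it is exhausted by an increasing sequence of finite sets `B l`,
with `B a * B b ⊆ B (a + b)`, whose cardinality is polynomially bounded. For finitely generated
groups this is the usual notion, but no finite generation is required. -/
def HasPolynomialGrowth (Q : Type*) [Group Q] : Prop :=
  ∃ B : ℕ → Finset Q, (∀ q, ∃ l, q ∈ B l) ∧ Monotone B ∧
    (∀ a b, ∀ x ∈ B a, ∀ y ∈ B b, x * y ∈ B (a + b)) ∧
    ∃ C d : ℕ, ∀ l, (B l).card ≤ C * (l + 1) ^ d

theorem HasPolynomialGrowth.pi {ι : Type*} [Finite ι] {Q : ι → Type*} [∀ i, Group (Q i)]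
    (h : ∀ i, HasPolynomialGrowth (Q i)) : HasPolynomialGrowth (∀ i, Q i) := by
  classical
  have := Fintype.ofFinite ι
  choose B exhausts mono mul_mem C d card_le using h
  refine ⟨fun l => Fintype.piFinset fun i => B i l, fun q => ?_, fun a b hab => ?_,
    fun a b x hx y hy => ?_, ∏ i, C i, ∑ i, d i, fun l => ?_⟩
  · choose l hl using fun i => exhausts i (q i)
    exact ⟨∑ i, l i, Fintype.mem_piFinset.2 fun i =>
      mono i (Finset.single_le_sum_of_canonicallyOrdered (Finset.mem_univ i)) (hl i)⟩
  · exact Fintype.piFinset_subset _ _ fun i => mono i hab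
  · rw [Fintype.mem_piFinset] at *
    exact fun i => mul_mem i a b _ (hx i) _ (hy i)
  · rw [Fintype.card_piFinset, ← Finset.prod_pow_eq_pow_sum, ← Finset.prod_mul_distrib]
    exact Finset.prod_le_prod' fun i _ => card_le i l

/-- Otherwise `f` would grow geometrically along an arithmetic progression. -/
theorem exists_mul_add_lt_succ_mul {f : ℕ → ℕ} {C d : ℕ} (hf : ∀ l, f l ≤ C * (l + 1) ^ d)
    {l₀ : ℕ} (hl₀ : 0 < f l₀) (c m : ℕ) : ∃ l, m * f (l + c) < (m + 1) * f l := by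
  by_contra! hstep
  have geometric (k : ℕ) : (m + 1) ^ k ≤ m ^ k * f (l₀ + k * c) := by
    induction k with
    | zero => simpa using Nat.succ_le_of_lt hl₀
    | succ k ih =>
      calc (m + 1) ^ (k + 1) = (m + 1) * (m + 1) ^ k := pow_succ' _ _
        _ ≤ (m + 1) * (m ^ k * f (l₀ + k * c)) := Nat.mul_le_mul_left _ ih
        _ = m ^ k * ((m + 1) * f (l₀ + k * c)) := by ring
        _ ≤ m ^ k * (m * f (l₀ + k * c + c)) := Nat.mul_le_mul_left _ (hstep _)
        _ = m ^ (k + 1) * f (l₀ + (k + 1) * c) := by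
          rw [show l₀ + (k + 1) * c = l₀ + k * c + c by ring]; ring
  have polynomial (k : ℕ) (hk : 1 ≤ k) : f (l₀ + k * c) ≤ C * (k * (c + l₀ + 1)) ^ d := by
    refine (hf _).trans ?_
    gcongr
    nlinarith
  let r : ℝ := m / (m + 1)
  have hr : r < 1 := by
    rw [div_lt_one (by positivity)]
    exact lt_add_one _
  have lower (k : ℕ) (hk : 1 ≤ k) : 1 ≤ C * (c + l₀ + 1 : ℝ) ^ d * (k ^ d * r ^ k) := by
    have : ((m : ℝ) + 1) ^ k ≤ m ^ k * (C * (k * (c + l₀ + 1)) ^ d) := mod_cast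
      (geometric k).trans (Nat.mul_le_mul_left _ (polynomial k hk))
    rw [div_pow, mul_pow] at *
    rw [mul_div_assoc', mul_div_assoc', one_le_div (by positivity)]
    linarith
  have limit := (tendsto_pow_const_mul_const_pow_of_lt_one d (by positivity) hr).const_mul
    (C * (c + l₀ + 1 : ℝ) ^ d)
  rw [mul_zero] at limit
  obtain ⟨k, hk, hk'⟩ :=
    ((limit.eventually_lt_const one_pos).and (Filter.eventually_ge_atTop 1)).exists
  exact (lower k hk').not_gt hk

theorem mul_mem_supported {k Q : Type*} [Semiring k] [Mul Q] {s t u : Set Q}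
    (hst : ∀ x ∈ s, ∀ y ∈ t, x * y ∈ u) {x y : MonoidAlgebra k Q}
    (hx : x ∈ MonoidAlgebra.supported k k s) (hy : y ∈ MonoidAlgebra.supported k k t) :
    x * y ∈ MonoidAlgebra.supported k k u := by
  classical
  intro q hq
  obtain ⟨a, ha, b, hb, rfl⟩ := Finset.mem_mul.1 (MonoidAlgebra.support_coeff_mul_subset x y hq)
  exact hst a (hx ha) b (hy hb)

/-- A `k[Q]`-linear map `k[Q]ⁿ⁺¹ → k[Q]ⁿ` shifts supports by a bounded amount `c`; if it were
injective, counting dimensions would give `(n + 1) * #(B l) ≤ n * #(B (l + c))` for all `l`. -/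
theorem HasPolynomialGrowth.strongRankCondition {Q : Type*} [Group Q] (hQ : HasPolynomialGrowth Q)
    (k : Type*) [Ring k] [StrongRankCondition k] :
    StrongRankCondition (MonoidAlgebra k Q) := by
  obtain ⟨B, exhausts, mono, mul_mem, C, d, card_le⟩ := hQ
  let V (l : ℕ) : Submodule k (MonoidAlgebra k Q) := MonoidAlgebra.supported k k (B l)
  have V_mono : Monotone V := fun a b hab => MonoidAlgebra.supported_mono (mono hab)
  have V_exhausts (x : MonoidAlgebra k Q) : ∃ l, x ∈ V l := by
    choose l hl using exhausts
    exact ⟨x.coeff.support.sup l, fun q hq => mono (Finset.le_sup hq) (hl q)⟩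
  let e (l : ℕ) : V l ≃ₗ[k] (B l →₀ k) := MonoidAlgebra.supportedEquivFinsupp _
  have (l : ℕ) : Module.Free k (V l) := .of_equiv (e l).symm
  have (l : ℕ) : Module.Finite k (V l) := .equiv (e l).symm
  have finrank_V (l n : ℕ) : Module.finrank k (Fin n → V l) = n * (B l).card := by
    simp [Module.finrank_pi_fintype, (e l).finrank_eq]
  refine (strongRankCondition_iff_succ _).2 fun m f hf => ?_
  obtain ⟨c, hc⟩ : ∃ c, ∀ i j, f (Pi.single i 1) j ∈ V c := by
    choose c hc using fun i j => V_exhausts (f (Pi.single i 1) j)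
    exact ⟨Finset.univ.sup fun i => Finset.univ.sup (c i), fun i j => V_mono
      ((Finset.le_sup (Finset.mem_univ j)).trans
        (Finset.le_sup (f := fun i => Finset.univ.sup (c i)) (Finset.mem_univ i))) (hc i j)⟩
  have shift {l : ℕ} (x : Fin (m + 1) → V l) (j : Fin m) : f (fun i => x i) j ∈ V (l + c) := by
    rw [pi_eq_sum_univ' fun i => (x i : MonoidAlgebra k Q), map_sum, Finset.sum_apply]
    refine Submodule.sum_mem _ fun i _ => ?_
    rw [map_smul]
    exact mul_mem_supported (mul_mem l c) (x i).2 (hc i j)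
  obtain ⟨l₀, hl₀⟩ := exhausts 1
  obtain ⟨l, hl⟩ := exists_mul_add_lt_succ_mul card_le (Finset.card_pos.2 ⟨1, hl₀⟩) c m
  let g : (Fin (m + 1) → V l) →ₗ[k] (Fin m → V (l + c)) := LinearMap.pi fun j =>
    (LinearMap.proj j ∘ₗ f.restrictScalars k ∘ₗ (V l).subtype.compLeft _).codRestrict _
      fun x => shift x j
  have hg : Function.Injective g := fun x y hxy => by
    have : f (fun i => x i) = f (fun i => y i) :=
      funext fun j => congrArg Subtype.val (congrFun hxy j)
    exact funext fun i => Subtype.ext (congrFun (hf this) i)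
  have := LinearMap.finrank_le_finrank_of_injective hg
  rw [finrank_V, finrank_V] at this
  exact this.not_gt hl

end PolynomialGrowth

section Unitriangular

open scoped Matrix

/-- Upper triangular matrices with `1` on the diagonal. -/
def IsUnitriangular {n R : Type*} [LT n] [Zero R] [One R] (M : Matrix n n R) : Prop :=
  M.BlockTriangular id ∧ ∀ i, M i i = 1

namespace IsUnitriangular

variable {n R : Type*} [LinearOrder n]

theorem one [NonAssocSemiring R] : IsUnitriangular (1 : Matrix n n R) :=
  ⟨Matrix.blockTriangular_one, Matrix.one_apply_eq⟩

variable [Fintype n]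

theorem vecMul_apply [NonAssocSemiring R] {M : Matrix n n R} (hM : IsUnitriangular M) {x : n → R}
    {j : n} (hx : ∀ i < j, x i = 0) : (x ᵥ* M) j = x j := by
  rw [Matrix.vecMul, dotProduct, Finset.sum_eq_single j]
  · rw [hM.2, mul_one]
  · intro i _ hij
    rcases hij.lt_or_gt with h | h
    · rw [hx i h, zero_mul]
    · rw [hM.1 h, mul_zero]
  · simp

theorem mul [NonAssocSemiring R] {M N : Matrix n n R} (hM : IsUnitriangular M)
    (hN : IsUnitriangular N) : IsUnitriangular (M * N) :=
  ⟨hM.1.mul hN.1, fun i => (hN.vecMul_apply fun _ hj => hM.1 hj).trans (hM.2 i)⟩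

theorem vecMul_lt_vecMul [Ring R] [LinearOrder R] [IsOrderedRing R] {M : Matrix n n R}
    (hM : IsUnitriangular M) {x y : n → R} (h : toLex x < toLex y) :
    toLex (x ᵥ* M) < toLex (y ᵥ* M) := by
  obtain ⟨j, heq, hlt⟩ := h
  have key {i : n} (hi : i ≤ j) : (y ᵥ* M) i - (x ᵥ* M) i = y i - x i := by
    rw [← Pi.sub_apply, ← Matrix.sub_vecMul, hM.vecMul_apply, Pi.sub_apply]
    exact fun a ha => sub_eq_zero.2 (heq a (ha.trans_le hi)).symm
  refine ⟨j, fun i hi => ?_, ?_⟩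
  · have : y i - x i = 0 := sub_eq_zero.2 (heq i hi).symm
    exact (sub_eq_zero.1 ((key hi.le).trans this)).symm
  · have : 0 < y j - x j := sub_pos.2 hlt
    exact sub_pos.1 (this.trans_eq (key le_rfl).symm)

end IsUnitriangular

/-- The group of unitriangular matrices, as matrices which are unitriangular together with
their inverse. -/
def unitriangularGroup (n R : Type*) [LinearOrder n] [Fintype n] [Semiring R] :
    Subgroup (Matrix n n R)ˣ where
  carrier := {u | IsUnitriangular u.val ∧ IsUnitriangular u.inv}
  one_mem' := ⟨.one, .one⟩
  mul_mem' ha hb := ⟨ha.1.mul hb.1, hb.2.mul ha.2⟩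
  inv_mem' ha := ⟨ha.2, ha.1⟩

namespace unitriangularGroup

variable {n R : Type*} [LinearOrder n] [Fintype n]

instance uniqueProds [Ring R] [LinearOrder R] [IsOrderedRing R] :
    UniqueProds (unitriangularGroup n R) := by
  let rows (u : unitriangularGroup n R) : Lex (n → Lex (n → R)) :=
    toLex fun i => toLex (u.1.val i)
  have rows_injective : Function.Injective rows := fun u v h =>
    Subtype.ext (Units.ext (funext fun i => congrFun h i))
  let := LinearOrder.lift' rows rows_injective
  have : MulRightStrictMono (unitriangularGroup n R) := ⟨fun w u v ⟨i, heq, hlt⟩ =>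
    ⟨i, fun j hj => congrArg (· ᵥ* w.1.val) (heq j hj), w.2.1.vecMul_lt_vecMul hlt⟩⟩
  have : TwoUniqueProds (unitriangularGroup n R) := TwoUniqueProds.of_covariant_left
  infer_instance

/-- The one-parameter subgroup `a ↦ 1 + a • X` attached to a strictly upper triangular matrix `X`
of square zero. -/
def oneParameter [CommRing R] {X : Matrix n n R} (hX : ∀ i j, j ≤ i → X i j = 0) (hXX : X * X = 0) :
    Multiplicative R →* unitriangularGroup n R :=
  let f : Multiplicative R →* Matrix n n R :=
    { toFun a := 1 + a.toAdd • X
      map_one' := by simp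
      map_mul' a b := by
        simp only [toAdd_mul, add_smul, mul_add, add_mul, smul_mul_smul_comm, hXX]
        simp [add_assoc] }
  have hf (a) : IsUnitriangular (f a) :=
    ⟨Matrix.blockTriangular_one.add fun i j h => by simp [hX i j h.le],
      fun i => by simp [f, hX i i le_rfl]⟩
  f.toHomUnits.codRestrict _ fun a => ⟨hf a, hf a⁻¹⟩

end unitriangularGroup

open Polynomial in
/-- The coefficients of `(X + a) ^ j`, i.e. `(j.choose i) * a ^ (j - i)`, as a matrix; these
matrices form a one-parameter group, which dominates the balls of `unitriangularGroup (Fin N) ℤ`. -/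
noncomputable def pascalMatrix (N : ℕ) {R : Type*} [CommSemiring R] (a : R) :
    Matrix (Fin N) (Fin N) R :=
  .of fun i j => ((X + C a) ^ (j : ℕ)).coeff i

theorem pascalMatrix_apply {N : ℕ} {R : Type*} [CommSemiring R] (a : R) (i j : Fin N) :
    pascalMatrix N a i j = a ^ ((j : ℕ) - i) * (j : ℕ).choose i := by
  rw [pascalMatrix, Matrix.of_apply, Polynomial.coeff_X_add_C_pow]

open Polynomial in
theorem pascalMatrix_mul {N : ℕ} {R : Type*} [CommSemiring R] (a b : R) :
    pascalMatrix N a * pascalMatrix N b = pascalMatrix N (a + b) := by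
  nontriviality R
  ext i j
  have deg : ((X + C b) ^ (j : ℕ)).natDegree < N := by
    rw [natDegree_pow_X_add_C]; exact j.2
  calc (pascalMatrix N a * pascalMatrix N b) i j
      = (∑ k ∈ Finset.range N,
          C (((X + C b) ^ (j : ℕ)).coeff k) * (X + C a) ^ k).coeff i := by
        simp [Matrix.mul_apply, pascalMatrix, mul_comm, Finset.sum_range]
    _ = (((X + C b) ^ (j : ℕ)).comp (X + C a)).coeff i := by
        rw [comp, eval₂_eq_sum_range' _ deg]
    _ = pascalMatrix N (a + b) i j := by
        simp [pascalMatrix, add_assoc]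

theorem abs_mul_apply_le_pascalMatrix {N : ℕ} {a b : ℤ} {u v : Matrix (Fin N) (Fin N) ℤ}
    (hu : ∀ i j, |u i j| ≤ pascalMatrix N a i j) (hv : ∀ i j, |v i j| ≤ pascalMatrix N b i j)
    (i j : Fin N) : |(u * v) i j| ≤ pascalMatrix N (a + b) i j := by
  rw [← pascalMatrix_mul, Matrix.mul_apply, Matrix.mul_apply]
  refine (Finset.abs_sum_le_sum_abs _ _).trans (Finset.sum_le_sum fun k _ => ?_)
  rw [abs_mul]
  exact mul_le_mul (hu i k) (hv k j) (abs_nonneg _) ((abs_nonneg _).trans (hu i k))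

theorem pascalMatrix_mono (N : ℕ) {a b : ℤ} (ha : 0 ≤ a) (hab : a ≤ b) (i j : Fin N) :
    pascalMatrix N a i j ≤ pascalMatrix N b i j := by
  simp only [pascalMatrix_apply]
  gcongr

theorem pascalMatrix_le (N : ℕ) {a : ℤ} (ha : 0 ≤ a) (i j : Fin N) :
    pascalMatrix N a i j ≤ (a + 1) ^ N := by
  rcases lt_or_ge (j : ℕ) i with hij | hij
  · rw [pascalMatrix_apply, Nat.choose_eq_zero_of_lt hij, Nat.cast_zero, mul_zero]
    positivity
  calc pascalMatrix N a i j = 1 ^ (i : ℕ) * a ^ ((j : ℕ) - i) * (j : ℕ).choose i := by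
        rw [pascalMatrix_apply, one_pow, one_mul]
    _ ≤ (1 + a) ^ (j : ℕ) := by
        rw [add_pow]
        exact Finset.single_le_sum
          (f := fun m => 1 ^ m * a ^ ((j : ℕ) - m) * ((j : ℕ).choose m : ℤ))
          (fun m _ => by positivity) (Finset.mem_range_succ_iff.2 hij)
    _ ≤ (a + 1) ^ N := by
        rw [add_comm]
        exact pow_le_pow_right₀ (by omega) j.2.le

theorem IsUnitriangular.exists_abs_apply_le_pascalMatrix {N : ℕ} {u : Matrix (Fin N) (Fin N) ℤ}
    (hu : IsUnitriangular u) : ∃ l : ℕ, ∀ i j, |u i j| ≤ pascalMatrix N (l : ℤ) i j := by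
  let l : ℕ := ∑ i, ∑ j, (u i j).natAbs
  have hl (i j : Fin N) : |u i j| ≤ l := by
    rw [Int.abs_eq_natAbs]
    exact mod_cast (Finset.single_le_sum_of_canonicallyOrdered
      (f := fun j => (u i j).natAbs) (Finset.mem_univ j)).trans
      (Finset.single_le_sum_of_canonicallyOrdered
        (f := fun i => ∑ j, (u i j).natAbs) (Finset.mem_univ i))
  refine ⟨l, fun i j => ?_⟩
  rw [pascalMatrix_apply]
  rcases lt_trichotomy i j with h | rfl | h
  · have hpow : (l : ℤ) ≤ l ^ ((j : ℕ) - i) :=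
      mod_cast Nat.le_self_pow (Nat.sub_ne_zero_of_lt h) l
    have hchoose : (1 : ℤ) ≤ (j : ℕ).choose i := mod_cast Nat.choose_pos h.le
    exact (hl i j).trans (hpow.trans (le_mul_of_one_le_right (by positivity) hchoose))
  · simp [hu.2]
  · rw [hu.1 h, abs_zero]
    positivity

theorem unitriangularGroup.hasPolynomialGrowth (N : ℕ) :
    HasPolynomialGrowth (unitriangularGroup (Fin N) ℤ) := by
  let entries (u : unitriangularGroup (Fin N) ℤ) : Fin N → Fin N → ℤ := u.1.val
  have entries_injective : Function.Injective entries := fun u v h =>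
    Subtype.ext (Units.ext h)
  let P (l : ℕ) : Fin N → Fin N → ℤ := pascalMatrix N (l : ℤ)
  let B (l : ℕ) := (Finset.Icc (-P l) (P l)).preimage entries entries_injective.injOn
  have mem_B {l : ℕ} {u} : u ∈ B l ↔ ∀ i j, |u.1.val i j| ≤ P l i j := by
    simp only [B, Finset.mem_preimage, Finset.mem_Icc, Pi.le_def, abs_le, forall_and]
    rfl
  refine ⟨B, fun u => ?_, fun a b hab u hu => ?_, fun a b u hu v hv => ?_,
    3 ^ (N * N), N * (N * N), fun l => ?_⟩
  · obtain ⟨l, hl⟩ := u.2.1.exists_abs_apply_le_pascalMatrix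
    exact ⟨l, mem_B.2 hl⟩
  · exact mem_B.2 fun i j =>
      (mem_B.1 hu i j).trans (pascalMatrix_mono N (Nat.cast_nonneg a) (Nat.cast_le.2 hab) i j)
  · rw [mem_B] at hu hv ⊢
    simp only [P, Nat.cast_add]
    exact abs_mul_apply_le_pascalMatrix hu hv
  · calc (B l).card ≤ (Finset.Icc (-P l) (P l)).card :=
          Finset.card_le_card_of_injOn entries (fun u hu => Finset.mem_preimage.1 hu)
            entries_injective.injOn
      _ = ∏ i, ∏ j, (P l i j + 1 + P l i j).toNat := by
          simp [Pi.card_Icc]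
      _ ≤ ∏ i : Fin N, ∏ j : Fin N, 3 * (l + 1) ^ N := by
          gcongr with i _ j _
          have : P l i j ≤ (l + 1) ^ N := pascalMatrix_le N (Nat.cast_nonneg l) i j
          have : (1 : ℤ) ≤ (l + 1) ^ N := one_le_pow₀ (by omega)
          zify
          omega
      _ = 3 ^ (N * N) * (l + 1) ^ (N * (N * N)) := by
          simp only [Finset.prod_const, Finset.card_univ, Fintype.card_fin]
          ring

end Unitriangular

section ResidualProperty

open scoped Matrix

open Classical in
/-- The matrix with a `1` in position `(a, a + 1)` whenever the `a`-th letter of `L` is `i`; along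
a word with letters `L`, these matrices move the first row vector to the last one. -/
noncomputable def letterMatrix {α : Type*} (L : List α) (R : Type*) [Zero R] [One R] (i : α) :
    Matrix (Fin (L.length + 1)) (Fin (L.length + 1)) R :=
  .of fun a b => if (b : ℕ) = a + 1 ∧ L[(a : ℕ)]? = some i then 1 else 0

theorem letterMatrix_apply_of_le {α R : Type*} [Zero R] [One R] (L : List α) (i : α)
    (a b : Fin (L.length + 1)) (h : b ≤ a) : letterMatrix L R i a b = 0 :=
  if_neg fun h' => by omega

theorem letterMatrix_mul_self {α R : Type*} [NonAssocSemiring R] {L : List α}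
    (hL : L.IsChain (· ≠ ·)) (i : α) : letterMatrix L R i * letterMatrix L R i = 0 := by
  ext a c
  rw [Matrix.mul_apply, Matrix.zero_apply]
  refine Finset.sum_eq_zero fun b _ => ?_
  simp only [letterMatrix, Matrix.of_apply, mul_ite, mul_one, mul_zero, ite_and]
  split_ifs with hc hb hab ha <;> try rfl
  rw [hab] at hb
  obtain ⟨hlt, hb⟩ := List.getElem?_eq_some_iff.1 hb
  obtain ⟨_, ha⟩ := List.getElem?_eq_some_iff.1 ha
  exact (List.isChain_iff_getElem.1 hL _ hlt (ha.trans hb.symm)).elim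

theorem vecMul_one_add_smul_letterMatrix {α R : Type*} [CommSemiring R] (L : List α) (i : α) (e : R)
    (x : Fin (L.length + 1) → R) {a b : Fin (L.length + 1)} (hab : (b : ℕ) = a + 1) :
    (x ᵥ* (1 + e • letterMatrix L R i)) b = x b + x a * (e * letterMatrix L R i a b) := by
  rw [Matrix.vecMul_add, Matrix.vecMul_one, Pi.add_apply, Matrix.vecMul, dotProduct,
    Finset.sum_eq_single a, Matrix.smul_apply, smul_eq_mul]
  · intro c _ hc
    rw [Matrix.smul_apply, letterMatrix, Matrix.of_apply, if_neg, smul_zero, mul_zero]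
    exact fun h => hc (Fin.ext (by omega))
  · simp

theorem prod_take_letterMatrix_apply {α R : Type*} [CommRing R] [IsDomain R] {L : List (α × R)}
    (hL : ∀ p ∈ L, p.2 ≠ 0) {k : ℕ} (hk : k ≤ L.length) (b : Fin _) :
    let P := ((L.map fun p => 1 + p.2 • letterMatrix (L.map Prod.fst) R p.1).take k).prod
    ((b : ℕ) = k → P 0 b ≠ 0) ∧ (k < (b : ℕ) → P 0 b = 0) := by
  induction k generalizing b with
  | zero =>
    simp only [List.take_zero, List.prod_nil]
    refine ⟨fun hb => ?_, fun hb => Matrix.one_apply_ne fun h => by simp [← h] at hb⟩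
    rw [Fin.ext (b := 0) hb, Matrix.one_apply_eq]
    exact one_ne_zero
  | succ k ih =>
    set M := L.map fun p => 1 + p.2 • letterMatrix (L.map Prod.fst) R p.1 with hM
    have hk' : k < M.length := by simpa [hM] using hk
    have step {a b : Fin _} (hab : (b : ℕ) = a + 1) : (M.take (k + 1)).prod 0 b =
        (M.take k).prod 0 b +
          (M.take k).prod 0 a * (L[k].2 * letterMatrix (L.map Prod.fst) R L[k].1 a b) := by
      rw [List.prod_take_succ M k hk', Matrix.mul_apply_eq_vecMul]
      simp only [hM, List.getElem_map]
      exact vecMul_one_add_smul_letterMatrix _ _ _ _ hab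
    have ih := ih (Nat.le_of_succ_le hk)
    have pred (hb : k < (b : ℕ)) : ∃ a : Fin ((L.map Prod.fst).length + 1), (b : ℕ) = a + 1 :=
      ⟨⟨b - 1, by omega⟩, (Nat.sub_add_cancel (Nat.zero_lt_of_lt hb)).symm⟩
    refine ⟨fun hb => ?_, fun hb => ?_⟩
    · obtain ⟨a, hab⟩ := pred (by omega)
      have ha : (a : ℕ) = k := by omega
      rw [step hab, (ih b).2 (by omega), zero_add]
      refine mul_ne_zero ((ih a).1 ha) (mul_ne_zero (hL _ (List.getElem_mem _)) ?_)
      simp [letterMatrix, hab, ha, List.getElem?_eq_getElem hk]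
    · obtain ⟨a, hab⟩ := pred (by omega)
      rw [step hab, (ih b).2 (by omega), (ih a).2 (by omega), zero_mul, zero_add]

/-- Magnus's argument: a reduced word of length `m` is detected by the corner entry of a
unitriangular matrix of size `m + 1`. -/
theorem exists_coprodI_hom_unitriangularGroup_ne_one {α R : Type*} [CommRing R] [IsDomain R]
    {g : Monoid.CoprodI fun _ : α => Multiplicative R} (hg : g ≠ 1) :
    ∃ (N : ℕ) (ρ : Monoid.CoprodI (fun _ : α => Multiplicative R) →* unitriangularGroup (Fin N) R),
      ρ g ≠ 1 := by
  classical
  let w := Monoid.CoprodI.Word.equiv g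
  have hw : w.prod = g := Monoid.CoprodI.Word.equiv.symm_apply_apply g
  let L : List (α × R) := w.toList.map fun p => (p.1, p.2.toAdd)
  have chain : (L.map Prod.fst).IsChain (· ≠ ·) := by
    simpa [L, List.isChain_map] using w.chain_ne
  let ρ := Monoid.CoprodI.lift fun i => unitriangularGroup.oneParameter
    (letterMatrix_apply_of_le (R := R) (L.map Prod.fst) i) (letterMatrix_mul_self chain i)
  refine ⟨_, ρ, fun hρ => ?_⟩
  have hprod : (ρ g).1.val =
      (L.map fun p => 1 + p.2 • letterMatrix (L.map Prod.fst) R p.1).prod := by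
    let val := (Units.coeHom (Matrix (Fin ((L.map Prod.fst).length + 1)) (Fin _) R)).comp
      (unitriangularGroup (Fin ((L.map Prod.fst).length + 1)) R).subtype
    change (val.comp ρ) g = _
    rw [← hw, Monoid.CoprodI.Word.prod, map_list_prod]
    simp only [L, List.map_map]
    congr 2
  have corner := (prod_take_letterMatrix_apply (L := L)
    (fun p hp => by
      obtain ⟨q, hq, rfl⟩ := List.mem_map.1 hp
      exact w.ne_one q hq) le_rfl (Fin.last _)).1 (by simp)
  rw [List.take_of_length_le (by simp), ← hprod, hρ] at corner
  have hL : L ≠ [] := fun h => hg <| by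
    rw [← hw, Monoid.CoprodI.Word.prod, List.map_eq_nil_iff.1 h, List.map_nil, List.prod_nil]
  exact corner (Matrix.one_apply_ne fun h => hL <| by simpa using congrArg Fin.val h.symm)

theorem exists_freeGroup_hom_unitriangularGroup_ne_one {α : Type*} {g : FreeGroup α} (hg : g ≠ 1) :
    ∃ (N : ℕ) (ρ : FreeGroup α →* unitriangularGroup (Fin N) ℤ), ρ g ≠ 1 := by
  let η : FreeGroup α →* Monoid.CoprodI fun _ : α => Multiplicative ℤ :=
    FreeGroup.lift fun i => Monoid.CoprodI.of (i := i) (Multiplicative.ofAdd 1)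
  let θ : Monoid.CoprodI (fun _ : α => Multiplicative ℤ) →* FreeGroup α :=
    Monoid.CoprodI.lift fun i => zpowersHom (FreeGroup α) (FreeGroup.of i)
  have hθη : θ.comp η = MonoidHom.id _ := by
    ext i
    simp [θ, η]
  have hη : η g ≠ 1 := fun h => hg <| by
    rw [← MonoidHom.id_apply (FreeGroup α) g, ← hθη, MonoidHom.comp_apply, h, map_one]
  obtain ⟨N, ρ, hρ⟩ := exists_coprodI_hom_unitriangularGroup_ne_one hη
  exact ⟨N, ρ.comp η, hρ⟩

theorem exists_injOn_freeGroup_hom.{u} {α : Type u} (S : Finset (FreeGroup α)) :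
    ∃ (Q : Type u) (_ : Group Q) (ρ : FreeGroup α →* Q),
      UniqueProds Q ∧ HasPolynomialGrowth Q ∧ Set.InjOn ρ S := by
  choose N ρ hρ using fun g : {g : FreeGroup α // g ≠ 1} =>
    exists_freeGroup_hom_unitriangularGroup_ne_one g.2
  let I := {p : S × S // p.1.1⁻¹ * p.2.1 ≠ 1}
  have : Finite I := Subtype.finite
  refine ⟨∀ p : I, unitriangularGroup (Fin (N ⟨_, p.2⟩)) ℤ, inferInstance,
    MonoidHom.pi fun p => ρ ⟨_, p.2⟩, inferInstance,
    .pi fun _ => unitriangularGroup.hasPolynomialGrowth _, fun a ha b hb hab => ?_⟩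
  by_contra hne
  have h : a⁻¹ * b ≠ 1 := fun h => hne (inv_mul_eq_one.1 h)
  refine hρ ⟨_, h⟩ ?_
  rw [map_mul, map_inv, inv_mul_eq_one]
  exact congrFun hab ⟨(⟨a, ha⟩, ⟨b, hb⟩), h⟩

theorem exists_injOn_hom.{u} {ι : Type u} {G : Type*} [Group G] (b : FreeGroupBasis ι G)
    (S : Finset G) :
    ∃ (Q : Type u) (_ : Group Q) (ρ : G →* Q),
      UniqueProds Q ∧ HasPolynomialGrowth Q ∧ Set.InjOn ρ S := by
  classical
  obtain ⟨Q, _, ρ, hQ, hQ', hρ⟩ := exists_injOn_freeGroup_hom (S.image b.repr)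
  refine ⟨Q, _, ρ.comp b.repr.toMonoidHom, hQ, hQ', ?_⟩
  rw [Finset.coe_image] at hρ
  exact hρ.comp b.repr.injective.injOn (Set.mapsTo_image _ _)

end ResidualProperty

theorem closure_range_freeGroupBasis {ι G : Type*} [Group G] (b : FreeGroupBasis ι G) :
    Subgroup.closure (Set.range b) = ⊤ := by
  have : Set.range b = b.repr.symm.toMonoidHom '' Set.range FreeGroup.of := by
    rw [← Set.range_comp]
    rfl
  rw [this, ← MonoidHom.map_closure, FreeGroup.closure_range_of, ← MonoidHom.range_eq_map,
    MonoidHom.range_eq_top]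
  exact b.repr.symm.surjective

section CrossedHom

/-- Crossed homomorphisms (derivations, 1-cocycles) with respect to an explicit action of `G` on an
additive group. -/
def IsCrossedHom {G E : Type*} [Group G] [AddCommGroup E] (A : Representation ℤ G E) (δ : G → E) :
    Prop :=
  ∀ g h, δ (g * h) = δ g + A g (δ h)

namespace IsCrossedHom

variable {G H E E' : Type*} [Group G] [Group H] [AddCommGroup E] [AddCommGroup E']
  {A : Representation ℤ G E} {δ ε : G → E}

theorem map_one (hδ : IsCrossedHom A δ) : δ 1 = 0 := by
  simpa using hδ 1 1

theorem map_inv (hδ : IsCrossedHom A δ) (g : G) : δ g⁻¹ = -A g⁻¹ (δ g) := by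
  have := hδ g⁻¹ g
  rw [inv_mul_cancel, hδ.map_one] at this
  exact eq_neg_of_add_eq_zero_left this.symm

theorem comp_hom (hδ : IsCrossedHom A δ) (ψ : H →* G) : IsCrossedHom (A.comp ψ) (δ ∘ ψ) :=
  fun g h => by simp only [Function.comp_apply, _root_.map_mul, hδ _ _, MonoidHom.comp_apply]

theorem map_equivariant (hδ : IsCrossedHom A δ) {A' : Representation ℤ G E'} {p : E →+ E'}
    (hp : ∀ g e, p (A g e) = A' g (p e)) : IsCrossedHom A' (p ∘ δ) :=
  fun g h => by simp only [Function.comp_apply, hδ _ _, map_add, hp]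

theorem eqOn_closure (hδ : IsCrossedHom A δ) (hε : IsCrossedHom A ε) {s : Set G}
    (h : s.EqOn δ ε) : Set.EqOn δ ε (Subgroup.closure s) := fun g hg => by
  induction hg using Subgroup.closure_induction with
  | mem g hg => exact h hg
  | one => rw [hδ.map_one, hε.map_one]
  | mul x y _ _ hx hy => rw [hδ, hε, hx, hy]
  | inv x _ hx => rw [hδ.map_inv, hε.map_inv, hx]

theorem ext_basis {ι : Type*} (b : FreeGroupBasis ι G) (hδ : IsCrossedHom A δ)
    (hε : IsCrossedHom A ε) (h : ∀ i, δ (b i) = ε (b i)) : δ = ε := by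
  rw [← Set.eqOn_univ, ← Subgroup.coe_top, ← closure_range_freeGroupBasis b]
  exact hδ.eqOn_closure hε (Set.forall_mem_range.2 h)

end IsCrossedHom

variable {ι G E : Type*} [Group G] [AddCommGroup E]

/-- The crossed homomorphism with given values on a free basis. Crossed homomorphisms are the
translation parts of actions by affine maps, and an action of a free group is freely specified on a
basis. -/
def crossedLift (b : FreeGroupBasis ι G) (A : Representation ℤ G E) (f : ι → E) (g : G) : E :=
  b.lift (fun i => AffineEquiv.constVAdd ℤ E (f i) *
    (LinearMap.GeneralLinearGroup.generalLinearEquiv ℤ E (A.asGroupHom (b i))).toAffineEquiv) g 0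

theorem isCrossedHom_crossedLift (b : FreeGroupBasis ι G) (A : Representation ℤ G E) (f : ι → E) :
    IsCrossedHom A (crossedLift b A f) := by
  intro g h
  let L : G →* E ≃ₗ[ℤ] E :=
    (LinearMap.GeneralLinearGroup.generalLinearEquiv ℤ E).toMonoidHom.comp A.asGroupHom
  let Φ := b.lift fun i => AffineEquiv.constVAdd ℤ E (f i) * (L (b i)).toAffineEquiv
  have linear_part : AffineEquiv.linearHom.comp Φ = L :=
    b.ext_hom _ _ fun i => by
      have : Φ (b i) = _ := congrFun (b.lift.symm_apply_apply _) i
      rw [MonoidHom.comp_apply, this]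
      rfl
  calc crossedLift b A f (g * h) = Φ g (Φ h 0 +ᵥ (0 : E)) := by
        rw [vadd_eq_add, add_zero]
        exact congrArg (· (0 : E)) (map_mul Φ g h)
    _ = (Φ g).linear (Φ h 0) + Φ g 0 := AffineEquiv.map_vadd _ _ _
    _ = L g (Φ h 0) + Φ g 0 := by rw [← linear_part]; rfl
    _ = crossedLift b A f g + A g (crossedLift b A f h) := add_comm _ _

theorem crossedLift_apply_basis (b : FreeGroupBasis ι G) (A : Representation ℤ G E) (f : ι → E)
    (i : ι) : crossedLift b A f (b i) = f i := by
  simp [crossedLift]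

end CrossedHom

section FoxDerivative

variable {ι G E : Type*} [Group G] [AddCommGroup E]

open Classical in
/-- The Fox derivative `∂/∂bₗ`: the crossed homomorphism into the integral group ring with value `1`
at `b l` and `0` at the other elements of the basis `b`. -/
noncomputable def foxDeriv (b : FreeGroupBasis ι G) (l : ι) : G → MonoidAlgebra ℤ G :=
  crossedLift b (.leftRegular ℤ G) (Pi.single l 1)

theorem IsCrossedHom.eq_asAlgebraHom_foxDeriv {A : Representation ℤ G E} {δ : G → E}
    (hδ : IsCrossedHom A δ) (b : FreeGroupBasis ι G) {l : ι} (h : ∀ i ≠ l, δ (b i) = 0) (g : G) :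
    δ g = A.asAlgebraHom (foxDeriv b l g) (δ (b l)) := by
  classical
  let p : MonoidAlgebra ℤ G →+ E := (LinearMap.toAddMonoidHom'.flip (δ (b l))).comp
    A.asAlgebraHom.toRingHom.toAddMonoidHom
  have hp (g : G) (x : MonoidAlgebra ℤ G) :
      p (Representation.leftRegular ℤ G g x) = A g (p x) := by
    rw [← Representation.asAlgebraHom_of, Representation.asAlgebraHom_ofMulAction_smul_eq_mul]
    simp [p]
  refine congrFun (hδ.ext_basis b
    ((isCrossedHom_crossedLift b _ (Pi.single l 1)).map_equivariant hp) fun i => ?_) g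
  rw [Function.comp_apply, crossedLift_apply_basis]
  rcases eq_or_ne i l with rfl | hi
  · simp [p]
  · rw [h i hi, Pi.single_eq_of_ne hi, map_zero]

/-- The crossed homomorphism `g ↦ g • K - K` into `ℤ[G ⧸ K]` vanishes exactly on `K`. -/
theorem foxDeriv_ne_zero (b : FreeGroupBasis ι G) {l : ι} {K : Subgroup G}
    (hK : ∀ i ≠ l, b i ∈ K) {w : G} (hw : w ∉ K) : foxDeriv b l w ≠ 0 := by
  let k : G ⧸ K := (1 : G)
  let δ (g : G) : MonoidAlgebra ℤ (G ⧸ K) := .single (g • k) 1 - .single k 1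
  have hδ : IsCrossedHom (.ofMulAction ℤ G (G ⧸ K)) δ := fun g h => by
    simp only [δ, map_sub, Representation.ofMulAction_single, mul_smul]
    abel
  have smul_eq (g : G) : g • k = k ↔ g ∈ K := by
    rw [← MulAction.mem_stabilizer_iff, MulAction.stabilizer_quotient]
  have δ_eq_zero (g : G) : δ g = 0 ↔ g ∈ K := by
    rw [← smul_eq, sub_eq_zero]
    exact MonoidAlgebra.single_left_inj one_ne_zero
  intro h
  refine hw ((δ_eq_zero w).1 ?_)
  rw [hδ.eq_asAlgebraHom_foxDeriv b (fun i hi => (δ_eq_zero _).2 (hK i hi)), h, map_zero,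
    LinearMap.zero_apply]

end FoxDerivative

section TwistedTranslation

variable {G R V W : Type*} [Group G] [Ring R] [MulAction G V] [AddCommGroup W] [Module R W]

/-- Translation of `R`-valued functions on a `G`-set, combined with right multiplication by the
value of a homomorphism `ρ : G →* R`; as `ρ` acts from the right, this is linear over `R`. -/
noncomputable def twistedTranslation (ρ : G →* R) (V : Type*) [MulAction G V] (g : G) :
    (V →₀ R) →ₗ[R] (V →₀ R) :=
  Finsupp.linearCombination R fun v => .single (g⁻¹ • v) (ρ g)

@[simp]
theorem twistedTranslation_single (ρ : G →* R) (g : G) (v : V) (r : R) :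
    twistedTranslation ρ V g (.single v r) = .single (g⁻¹ • v) (r * ρ g) := by
  simp [twistedTranslation]

theorem twistedTranslation_apply (ρ : G →* R) (g : G) (u : V →₀ R) (v : V) :
    twistedTranslation ρ V g u v = u (g • v) * ρ g := by
  classical
  induction u using Finsupp.induction_linear with
  | zero => simp
  | add u u' hu hu' => rw [map_add, Finsupp.add_apply, hu, hu', Finsupp.add_apply, add_mul]
  | single w r =>
    simp only [twistedTranslation_single, Finsupp.single_apply, inv_smul_eq_iff, ite_mul, zero_mul]

/-- The action of `G` on `R`-linear maps out of `V →₀ R` by precomposition with twisted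
translations. -/
noncomputable def precompRep (ρ : G →* R) (V W : Type*) [MulAction G V] [AddCommGroup W]
    [Module R W] : Representation ℤ G ((V →₀ R) →ₗ[R] W) where
  toFun g :=
    { toFun := fun T => T ∘ₗ twistedTranslation ρ V g
      map_add' := fun T T' => LinearMap.add_comp _ T' T
      map_smul' := fun n T => LinearMap.smul_comp n T _ }
  map_one' := by ext; simp
  map_mul' g h := by ext; simp [mul_smul]

theorem precompRep_apply (ρ : G →* R) (g : G) (T : (V →₀ R) →ₗ[R] W) :
    precompRep ρ V W g T = T ∘ₗ twistedTranslation ρ V g :=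
  rfl

end TwistedTranslation

section Shapiro

variable {G E : Type*} [Group G] [AddCommGroup E]

theorem IsCrossedHom.exists_extension {A : Representation ℤ G E} {D : Subgroup G} {δ : D → E}
    (hδ : IsCrossedHom (A.comp D.subtype) δ) :
    ∃ d : G → E, d 1 = 0 ∧ ∀ (c : D) (g : G), d (c * g) = δ c + A c (d g) := by
  obtain ⟨T, hT, h1⟩ := D.exists_isComplement_right 1
  refine ⟨fun g => δ (hT.equiv g).1, ?_, fun c g => ?_⟩
  · simp only [hT.equiv_one D.one_mem h1]
    exact hδ.map_one
  · simp only [hT.equiv_mul_left]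
    exact hδ _ _

/-- A crossed homomorphism on a point stabilizer is induced by one on the whole group. This is the
part of Shapiro's lemma which produces dual functionals. -/
theorem IsCrossedHom.exists_precompRep {R V : Type*} [Ring R] [MulAction G V] {ρ : G →* R} {v₀ : V}
    {δ : MulAction.stabilizer G v₀ → R}
    (hδ : IsCrossedHom (((Algebra.lmul ℤ R).toMonoidHom.comp ρ).comp (Subgroup.subtype _)) δ) :
    ∃ κ : G → ((V →₀ R) →ₗ[R] R), IsCrossedHom (precompRep ρ V R) κ ∧
      ∀ g : MulAction.stabilizer G v₀, κ g (.single v₀ 1) = δ g := by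
  obtain ⟨d, d_one, d_mul⟩ := hδ.exists_extension
  let coeff (g s : G) : R := ρ s⁻¹ * (d (s * g) - d s)
  let orbit (s : G) : V := s⁻¹ • v₀
  have factors (g : G) : (coeff g).FactorsThrough orbit := fun s t hst => by
    have hc : s * t⁻¹ ∈ MulAction.stabilizer G v₀ := by
      rw [MulAction.mem_stabilizer_iff, mul_smul, smul_eq_iff_eq_inv_smul]
      exact hst.symm
    have hs (x : G) : d (s * x) = δ ⟨_, hc⟩ + ρ (s * t⁻¹) * d (t * x) := by
      rw [show s * x = s * t⁻¹ * (t * x) by group]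
      exact d_mul ⟨_, hc⟩ _
    have hρ : ρ s⁻¹ * ρ (s * t⁻¹) = ρ t⁻¹ := by rw [← map_mul, inv_mul_cancel_left]
    have hs1 := hs 1
    rw [mul_one, mul_one] at hs1
    simp only [coeff, hs, hs1, add_sub_add_left_eq_sub, ← mul_sub, ← mul_assoc, hρ]
  let κ (g : G) : (V →₀ R) →ₗ[R] R :=
    Finsupp.linearCombination R (Function.extend orbit (coeff g) 0)
  have κ_orbit (g s : G) (r : R) : κ g (.single (orbit s) r) = r * coeff g s := by
    rw [Finsupp.linearCombination_single, (factors g).extend_apply, smul_eq_mul]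
  have κ_off {v : V} (hv : ∀ s, orbit s ≠ v) (g : G) (r : R) : κ g (.single v r) = 0 := by
    rw [Finsupp.linearCombination_single, Function.extend_apply' _ _ _ fun ⟨s, hs⟩ => hv s hs,
      Pi.zero_apply, smul_zero]
  refine ⟨κ, fun g h => ?_, fun g => ?_⟩
  · ext v
    simp only [LinearMap.comp_apply, Finsupp.lsingle_apply, LinearMap.add_apply, precompRep_apply,
      twistedTranslation_single, one_mul]
    by_cases hv : ∃ s, orbit s = v
    · obtain ⟨s, rfl⟩ := hv
      have translate : g⁻¹ • orbit s = orbit (s * g) := by simp [orbit, mul_smul]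
      rw [translate, κ_orbit, κ_orbit, κ_orbit]
      simp only [coeff, one_mul, mul_inv_rev, map_mul, ← mul_assoc, mul_sub]
      rw [← map_mul ρ g, mul_inv_cancel, _root_.map_one, one_mul]
      abel
    · rw [κ_off (not_exists.1 hv), κ_off (not_exists.1 hv), κ_off, add_zero]
      exact fun s hs => hv ⟨s * g⁻¹, by simpa [orbit, mul_smul, eq_inv_smul_iff] using hs⟩
  · have := κ_orbit g 1 1
    simpa [orbit, coeff, d_one, show d g = δ g by simpa [d_one] using d_mul g 1] using this

end Shapiro

section BlockRow

variable {R V W β : Type*} [Ring R] [AddCommGroup W] [Module R W]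

/-- The inclusion of the `j`-th summand into the direct sum of copies of `V →₀ R` indexed by `β`,
which is encoded as `β × V →₀ R`. -/
noncomputable def blockIncl (R V : Type*) {β : Type*} [Ring R] (j : β) :
    (V →₀ R) →ₗ[R] (β × V →₀ R) :=
  Finsupp.lmapDomain R R (Prod.mk j)

theorem blockIncl_single (j : β) (v : V) (r : R) :
    blockIncl R V j (.single v r) = .single (j, v) r :=
  Finsupp.mapDomain_single

/-- The projection of a direct sum of copies of `V →₀ R` to the `l`-th summand. -/
noncomputable def blockProj (R V : Type*) {β : Type*} [Ring R] (l : β) :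
    (β × V →₀ R) →ₗ[R] (V →₀ R) :=
  Finsupp.lcomapDomain (Prod.mk l) (Prod.mk_right_injective l)

theorem blockProj_blockIncl_same (l : β) (u : V →₀ R) :
    blockProj R V l (blockIncl R V l u) = u :=
  Finsupp.comapDomain_mapDomain _ (Prod.mk_right_injective l) u

theorem blockProj_blockIncl_of_ne {j l : β} (h : j ≠ l) (u : V →₀ R) :
    blockProj R V l (blockIncl R V j u) = 0 := by
  ext v
  refine Finsupp.mapDomain_of_notMem_range u (l, v) ?_
  rintro ⟨_, hv⟩
  exact h (congrArg Prod.fst hv)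

/-- The linear map out of a direct sum of copies of `V →₀ R` given by its restrictions to the
summands. -/
noncomputable def blockRow (T : β → ((V →₀ R) →ₗ[R] W)) : (β × V →₀ R) →ₗ[R] W :=
  Finsupp.linearCombination R fun p => T p.1 (.single p.2 1)

theorem blockRow_blockIncl (T : β → ((V →₀ R) →ₗ[R] W)) (j : β) (u : V →₀ R) :
    blockRow T (blockIncl R V j u) = T j u := by
  induction u using Finsupp.induction_linear with
  | zero => simp
  | add u u' hu hu' => simp only [map_add, hu, hu']
  | single v r => simp [blockRow, blockIncl_single, ← map_smul]

/-- Only the `l`-th block can destroy injectivity, and it is controlled by its diagonal entry. -/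
theorem blockRow_injective {T : β → ((V →₀ R) →ₗ[R] (β × V →₀ R))} {l : β}
    (hT : ∀ j ≠ l, T j = blockIncl R V j) (hl : Function.Injective (blockProj R V l ∘ₗ T l)) :
    Function.Injective (blockRow T) := by
  have blockRow_eq : blockRow T = .id + (T l - blockIncl R V l) ∘ₗ blockProj R V l := by
    ext ⟨j, v⟩ : 2
    simp only [LinearMap.comp_apply, Finsupp.lsingle_apply, ← blockIncl_single (R := R) j,
      LinearMap.add_apply, LinearMap.id_apply, LinearMap.sub_apply, blockRow_blockIncl]
    rcases eq_or_ne j l with rfl | hj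
    · rw [blockProj_blockIncl_same, add_sub_cancel]
    · rw [blockProj_blockIncl_of_ne hj, map_zero, map_zero, sub_zero, add_zero, hT j hj]
  rw [injective_iff_map_eq_zero]
  intro u hu
  have hul : blockProj R V l u = 0 := by
    refine (injective_iff_map_eq_zero _).1 hl _ ?_
    calc blockProj R V l (T l (blockProj R V l u)) = blockProj R V l (blockRow T u) := by
          simp only [blockRow_eq, LinearMap.add_apply, LinearMap.id_apply, LinearMap.comp_apply,
            LinearMap.sub_apply, map_add, map_sub, blockProj_blockIncl_same, add_sub_cancel]
      _ = 0 := by rw [hu, map_zero]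
  simpa [blockRow_eq, hul] using hu

end BlockRow

section FoxDifferential

variable {G R V W W' β γ : Type*} [Group G] [Ring R] [MulAction G V] [AddCommGroup W] [Module R W]
  [AddCommGroup W'] [Module R W'] {ρ : G →* R} {Θ : G → ((V →₀ R) →ₗ[R] W)} {v₀ : V}

/-- The universal crossed homomorphism into modules of the form `precompRep ρ V W`: it sends the
`j`-th basis element to the inclusion of the `j`-th copy of `V →₀ R`. -/
noncomputable def foxDifferential (c : FreeGroupBasis β G) (ρ : G →* R) (V : Type*)
    [MulAction G V] : G → ((V →₀ R) →ₗ[R] (β × V →₀ R)) :=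
  crossedLift c (precompRep ρ V _) fun j => blockIncl R V j

theorem isCrossedHom_foxDifferential (c : FreeGroupBasis β G) :
    IsCrossedHom (precompRep ρ V _) (foxDifferential c ρ V) :=
  isCrossedHom_crossedLift _ _ _

theorem foxDifferential_apply_basis (c : FreeGroupBasis β G) (j : β) :
    foxDifferential c ρ V (c j) = blockIncl R V j :=
  crossedLift_apply_basis _ _ _ _

namespace IsCrossedHom

theorem linearMap_comp (hΘ : IsCrossedHom (precompRep ρ V W) Θ) (p : W →ₗ[R] W') :
    IsCrossedHom (precompRep ρ V W') fun g => p ∘ₗ Θ g := fun g h => by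
  simp only [hΘ g h, LinearMap.comp_add, precompRep_apply, LinearMap.comp_assoc]

theorem eq_blockRow_comp_foxDifferential (hΘ : IsCrossedHom (precompRep ρ V W) Θ)
    (c : FreeGroupBasis β G) (g : G) :
    Θ g = blockRow (fun j => Θ (c j)) ∘ₗ foxDifferential c ρ V g := by
  refine congrFun (hΘ.ext_basis c ((isCrossedHom_foxDifferential c).linearMap_comp _)
    fun j => ?_) g
  rw [foxDifferential_apply_basis]
  exact (LinearMap.ext fun u => blockRow_blockIncl (fun j => Θ (c j)) j u).symm

end IsCrossedHom

theorem linearIndependent_foxDifferential (c : FreeGroupBasis β G)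
    (y : FreeGroupBasis γ (MulAction.stabilizer G v₀)) :
    LinearIndependent R fun j => foxDifferential c ρ V (y j) (.single v₀ 1) := by
  classical
  have dual (j₀ : γ) : ∃ f : Module.Dual R (β × V →₀ R),
      ∀ j, f (foxDifferential c ρ V (y j) (.single v₀ 1)) = Pi.single (M := fun _ => R) j₀ 1 j := by
    obtain ⟨κ, hκ, κ_stabilizer⟩ := (isCrossedHom_crossedLift y
      (((Algebra.lmul ℤ R).toMonoidHom.comp ρ).comp (Subgroup.subtype _))
      (Pi.single j₀ 1)).exists_precompRep
    refine ⟨blockRow fun i => κ (c i), fun j => ?_⟩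
    rw [← LinearMap.comp_apply, ← hκ.eq_blockRow_comp_foxDifferential c, κ_stabilizer,
      crossedLift_apply_basis]
  choose f hf using dual
  refine .of_pairwise_dual_eq_zero_one _ f 
    (fun i j hij => (hf i j).trans (Pi.single_eq_of_ne hij.symm _))
    fun i => (hf i i).trans (Pi.single_eq_same _ _)

namespace IsCrossedHom

theorem linearIndependent_stabilizer (hΘ : IsCrossedHom (precompRep ρ V W) Θ)
    (c : FreeGroupBasis β G) (hJ : Function.Injective (blockRow fun j => Θ (c j)))
    (y : FreeGroupBasis γ (MulAction.stabilizer G v₀)) :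
    LinearIndependent R fun j => Θ (y j) (.single v₀ 1) := by
  have := (linearIndependent_foxDifferential (ρ := ρ) c y).map_injOn _ hJ.injOn
  convert this using 2 with j
  rw [hΘ.eq_blockRow_comp_foxDifferential c]
  rfl

theorem apply_mem_span (hΘ : IsCrossedHom (precompRep ρ V W) Θ) {S : Set G}
    (hS : Subgroup.closure S ≤ MulAction.stabilizer G v₀) {g : G} (hg : g ∈ Subgroup.closure S) :
    Θ g (.single v₀ 1) ∈ Submodule.span R ((fun s => Θ s (.single v₀ 1)) '' S) := by
  have translate {g : G} (hg : g ∈ Subgroup.closure S) (h : G) :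
      precompRep ρ V W g (Θ h) (.single v₀ 1) = ρ g • Θ h (.single v₀ 1) := by
    rw [precompRep_apply, LinearMap.comp_apply, twistedTranslation_single,
      inv_smul_eq_iff.2 (hS hg).symm, one_mul, ← map_smul, Finsupp.smul_single, smul_eq_mul,
      mul_one]
  induction hg using Subgroup.closure_induction with
  | mem s hs => exact Submodule.subset_span ⟨s, hs, rfl⟩
  | one => simp [hΘ.map_one]
  | mul g h hg _ ihg ihh =>
    rw [hΘ, LinearMap.add_apply, translate hg]
    exact add_mem ihg (Submodule.smul_mem _ _ ihh)
  | inv g hg ih =>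
    rw [hΘ.map_inv, LinearMap.neg_apply, translate (inv_mem hg)]
    exact neg_mem (Submodule.smul_mem _ _ ih)

end IsCrossedHom

end FoxDifferential

section Rank

universe u w
variable {F H R V W β : Type*} [Group F] [Group H]

theorem rk_le_of_closure_eq {K : Subgroup F} {S : Set F} (hS : Subgroup.closure S = K) :
    rk K ≤ Cardinal.mk S :=
  ciInf_le' (fun S : {S : Set F // Subgroup.closure S = K} => Cardinal.mk S.1) ⟨S, hS⟩

theorem mk_le_of_linearIndepOn_of_mem_span {α : Type u} {W : Type w} [Ring R]
    [StrongRankCondition R] [AddCommGroup W] [Module R W] {f : α → W} {S T : Set α}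
    (hT : LinearIndepOn R f T) (h : ∀ t ∈ T, f t ∈ Submodule.span R (f '' S)) :
    Cardinal.mk T ≤ Cardinal.mk S := by
  have := nontrivial_of_invariantBasisNumber R
  let M := Submodule.span R (f '' S)
  have indep : LinearIndependent R fun t : T => (⟨f t, h t t.2⟩ : M) := .of_comp M.subtype hT
  refine Cardinal.lift_le.{w}.1 ?_
  calc Cardinal.lift.{w} (Cardinal.mk T) ≤ Cardinal.lift.{u} (Module.rank R M) :=
        indep.cardinal_lift_le_rank
    _ ≤ Cardinal.lift.{u} (Cardinal.mk (f '' S)) := Cardinal.lift_le.2 (rank_span_le _)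
    _ ≤ Cardinal.lift.{w} (Cardinal.mk S) := Cardinal.mk_image_le_lift

variable [Ring R] [MulAction F V] [AddCommGroup W] [Module R W] [StrongRankCondition R]
  {ρ : F →* R} {Θ : F → ((V →₀ R) →ₗ[R] W)}

/-- A basis of the stabilizer in `H` yields linearly independent vectors inside the span of the
vectors coming from any generating set of the stabilizer in `F`. -/
theorem IsCrossedHom.rk_range_inf_stabilizer_le (hΘ : IsCrossedHom (precompRep ρ V W) Θ)
    {ψ : H →* F} (c : FreeGroupBasis β H) (hJ : Function.Injective (blockRow fun j => Θ (ψ (c j))))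
    (v₀ : V) :
    rk (ψ.range ⊓ MulAction.stabilizer F v₀) ≤ rk (MulAction.stabilizer F v₀) := by
  let K := MulAction.stabilizer F v₀
  let : MulAction H V := .compHom V ψ
  have := c.isFreeGroup
  have := nontrivial_of_invariantBasisNumber R
  let y := IsFreeGroup.basis (MulAction.stabilizer H v₀)
  have closure_range_y : Subgroup.closure (Set.range fun j => ψ (y j)) = ψ.range ⊓ K := by
    rw [show (fun j => ψ (y j)) = ψ ∘ Subtype.val ∘ y from rfl, Set.range_comp, Set.range_comp,
      ← MonoidHom.map_closure, ← Subgroup.coe_subtype, ← MonoidHom.map_closure,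
      closure_range_freeGroupBasis, ← MonoidHom.range_eq_map, Subgroup.range_subtype]
    exact Subgroup.map_comap_eq ψ K
  have precompRep_comp : (precompRep ρ V W).comp ψ = precompRep (ρ.comp ψ) V W := by
    ext h T v
    simp [precompRep_apply, MulAction.compHom_smul_def]
  have indep : LinearIndependent R fun j => Θ (ψ (y j)) (.single v₀ 1) :=
    (precompRep_comp ▸ hΘ.comp_hom ψ).linearIndependent_stabilizer c hJ y
  have : Nonempty {S : Set F // Subgroup.closure S = K} := ⟨K, K.closure_eq⟩
  refine le_ciInf fun ⟨S, hS⟩ => (rk_le_of_closure_eq closure_range_y).trans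
    (mk_le_of_linearIndepOn_of_mem_span (R := R) (f := fun g => Θ g (.single v₀ 1)) ?_ ?_)
  · exact (linearIndepOn_range_iff
      (.of_comp (f := fun g => Θ g (.single v₀ 1)) indep.injective) _).2 indep
  · rintro _ ⟨j, rfl⟩
    exact hΘ.apply_mem_span hS.le (hS ▸ (y j).2)

end Rank

section GroupRingOperator

variable {F V Q : Type*} [Group F] [MulAction F V] [Group Q]

theorem coeff_asAlgebraHom_precompRep_id (ρ : F →* Q) (c : MonoidAlgebra ℤ F)
    (u : V →₀ MonoidAlgebra ℤ Q) (v : V) (q : Q) :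
    ((precompRep ((MonoidAlgebra.of ℤ Q).comp ρ) V (V →₀ MonoidAlgebra ℤ Q)).asAlgebraHom c
      LinearMap.id u v).coeff q = c.coeff.sum fun g n => n * (u (g • v)).coeff (q * (ρ g)⁻¹) := by
  induction c using MonoidAlgebra.induction_linear with
  | zero => simp
  | add c c' hc hc' =>
    rw [map_add, LinearMap.add_apply, LinearMap.add_apply, Finsupp.add_apply,
      MonoidAlgebra.coeff_add, Finsupp.add_apply, hc, hc', MonoidAlgebra.coeff_add,
      Finsupp.sum_add_index']
    · simp
    · intros
      ring
  | single g n =>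
    rw [Representation.asAlgebraHom_single]
    simp [precompRep_apply, twistedTranslation_apply, -zsmul_eq_mul]

/-- At a product `a₀ * ρ g₀` occurring only once among the products of coefficient supports, nothing
can cancel. -/
theorem asAlgebraHom_precompRep_id_injective [UniqueProds Q] {ρ : F →* Q} {c : MonoidAlgebra ℤ F}
    (hc : c ≠ 0) (hρ : Set.InjOn ρ c.coeff.support) :
    Function.Injective ((precompRep ((MonoidAlgebra.of ℤ Q).comp ρ) V
      (V →₀ MonoidAlgebra ℤ Q)).asAlgebraHom c LinearMap.id) := by
  classical
  rw [injective_iff_map_eq_zero]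
  intro u hu
  by_contra hu0
  let A : Finset Q := u.support.biUnion fun v => (u v).coeff.support
  have mem_A {v : V} {a : Q} (ha : (u v).coeff a ≠ 0) : a ∈ A := by
    refine Finset.mem_biUnion.2 ⟨v, Finsupp.mem_support_iff.2 fun h => ha ?_,
      Finsupp.mem_support_iff.2 ha⟩
    rw [h, MonoidAlgebra.coeff_zero, Finsupp.zero_apply]
  have A_nonempty : A.Nonempty := by
    obtain ⟨v, hv⟩ := Finsupp.ne_iff.1 hu0
    obtain ⟨a, ha⟩ := Finsupp.ne_iff.1 (MonoidAlgebra.coeff_eq_zero.not.2 hv)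
    exact ⟨a, mem_A ha⟩
  obtain ⟨a₀, ha₀, b₀, hb₀, unique⟩ := UniqueProds.uniqueMul_of_nonempty A_nonempty
    ((Finsupp.support_nonempty_iff.2 (MonoidAlgebra.coeff_eq_zero.not.2 hc)).image ρ)
  obtain ⟨v, -, hv⟩ := Finset.mem_biUnion.1 ha₀
  obtain ⟨g₀, hg₀, rfl⟩ := Finset.mem_image.1 hb₀
  have key := coeff_asAlgebraHom_precompRep_id ρ c u (g₀⁻¹ • v) (a₀ * ρ g₀)
  rw [hu, Finsupp.zero_apply, MonoidAlgebra.coeff_zero, Finsupp.zero_apply, Finsupp.sum,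
    Finset.sum_eq_single_of_mem g₀ hg₀ fun g hg hne => ?_, smul_inv_smul,
    mul_inv_cancel_right] at key
  · exact mul_ne_zero (Finsupp.mem_support_iff.1 hg₀) (Finsupp.mem_support_iff.1 hv) key.symm
  · refine mul_eq_zero_of_right _ (by_contra fun h => hne (hρ hg hg₀ ?_))
    exact (unique (mem_A h) (Finset.mem_image_of_mem ρ hg) (inv_mul_cancel_right _ _)).2

end GroupRingOperator

section Conclusion

variable {ι G : Type*} [Group G]

theorem isInert_closure_image_freeGroupBasis (b : FreeGroupBasis ι G) (s : Set ι) :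
    IsInert (Subgroup.closure (b '' s)) := by
  intro K _
  let c := FreeGroupBasis.ofFreeGroup s
  let ψ : FreeGroup s →* G := FreeGroup.lift fun i => b i
  have ψ_range : ψ.range = Subgroup.closure (b '' s) := by
    rw [FreeGroup.range_lift_eq_closure, Set.image_eq_range]
  have jacobian : blockRow (fun i => foxDifferential b (1 : G →* ℤ) (G ⧸ K) (ψ (c i))) =
      Finsupp.lmapDomain ℤ ℤ (Prod.map Subtype.val id) := by
    ext ⟨i, v⟩ : 2
    rw [LinearMap.comp_apply, Finsupp.lsingle_apply, ← blockIncl_single, blockRow_blockIncl,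
      show ψ (c i) = b i from FreeGroup.lift_apply_of, foxDifferential_apply_basis,
      blockIncl_single]
    simp
  have jacobian_injective := Finsupp.mapDomain_injective (M := ℤ)
    (Subtype.val_injective.prodMap Function.injective_id : Function.Injective
      (Prod.map (Subtype.val : s → ι) (id : G ⧸ K → G ⧸ K)))
  rw [← ψ_range, ← MulAction.stabilizer_quotient K]
  refine (isCrossedHom_foxDifferential (ρ := (1 : G →* ℤ)) b).rk_range_inf_stabilizer_le c ?_ _
  rwa [jacobian]

theorem isInert_range_of_map_notMem_closure (b : FreeGroupBasis ι G) {φ : G →* G} {l : ι}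
    (hφ : ∀ i ≠ l, φ (b i) = b i) (hl : φ (b l) ∉ Subgroup.closure (b '' {l}ᶜ)) :
    IsInert φ.range := by
  intro K _
  have fox_ne_zero := foxDeriv_ne_zero b
    (fun i hi => Subgroup.subset_closure (Set.mem_image_of_mem b hi)) hl
  obtain ⟨Q, _, ρ, _, hQ, hρ⟩ :=
    exists_injOn_hom b (foxDeriv b l (φ (b l))).coeff.support
  have := hQ.strongRankCondition ℤ
  let Θ := foxDifferential b ((MonoidAlgebra.of ℤ Q).comp ρ) (G ⧸ K)
  have hΘ : IsCrossedHom _ Θ := isCrossedHom_foxDifferential b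
  have Θ_basis (i : ι) : Θ (b i) = blockIncl _ _ i := foxDifferential_apply_basis b i
  have proj_incl_same : blockProj (MonoidAlgebra ℤ Q) (G ⧸ K) l ∘ₗ blockIncl _ _ l = .id :=
    LinearMap.ext (blockProj_blockIncl_same l)
  have proj_incl_of_ne {i : ι} (hi : i ≠ l) :
      blockProj (MonoidAlgebra ℤ Q) (G ⧸ K) l ∘ₗ blockIncl _ _ i = 0 :=
    LinearMap.ext (blockProj_blockIncl_of_ne hi)
  have diagonal_eq (g : G) : blockProj _ _ l ∘ₗ Θ g =
      (precompRep ((MonoidAlgebra.of ℤ Q).comp ρ) (G ⧸ K) _).asAlgebraHom (foxDeriv b l g) .id := by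
    rw [(hΘ.linearMap_comp (blockProj _ _ l)).eq_asAlgebraHom_foxDeriv b (l := l)
      fun i hi => by rw [Θ_basis, proj_incl_of_ne hi], Θ_basis, proj_incl_same]
  rw [← MulAction.stabilizer_quotient K]
  refine hΘ.rk_range_inf_stabilizer_le b (blockRow_injective (l := l) (fun i hi => ?_) ?_) _
  · rw [hφ i hi, Θ_basis]
  · rw [diagonal_eq]
    exact asAlgebraHom_precompRep_id_injective fox_ne_zero hρ

theorem range_eq_closure_image_of_mapsTo (b : FreeGroupBasis ι G) {φ : G →* G} {s : Set ι}
    (hφ : ∀ i ∉ s, φ (b i) = b i) (hs : ∀ i ∈ s, φ (b i) ∈ Subgroup.closure (b '' sᶜ)) :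
    φ.range = Subgroup.closure (b '' sᶜ) := by
  rw [MonoidHom.range_eq_map, ← closure_range_freeGroupBasis b, MonoidHom.map_closure]
  refine le_antisymm ((Subgroup.closure_le _).2 ?_) ((Subgroup.closure_le _).2 ?_)
  · rintro _ ⟨_, ⟨i, rfl⟩, rfl⟩
    by_cases hi : i ∈ s
    · exact hs i hi
    · rw [hφ i hi]
      exact Subgroup.subset_closure ⟨i, hi, rfl⟩
  · rintro _ ⟨i, hi, rfl⟩
    exact Subgroup.subset_closure ⟨b i, ⟨i, rfl⟩, hφ i hi⟩

end Conclusion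

theorem oneGenEndo_image_inert_general {G : Type*} [Group G] {φ : G →* G} (hφ : IsOneGenEndo φ) :
    IsInert φ.range := by
  obtain ⟨ι, b, s, hs, hφ⟩ := hφ
  by_cases h : ∀ i ∈ s, φ (b i) ∈ Subgroup.closure (b '' sᶜ)
  · rw [range_eq_closure_image_of_mapsTo b hφ h]
    exact isInert_closure_image_freeGroupBasis b sᶜ
  · push Not at h
    obtain ⟨l, hl, hφl⟩ := h
    obtain rfl := hs.eq_singleton_of_mem hl
    exact isInert_range_of_map_notMem_closure b hφ hφl

/-- The image of a 1-generator endomorphism of a free group (an endomorphism fixing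
all basis elements except possibly the last one) is inert. -/
theorem oneGenEndo_image_inert (n : ℕ) (φ : FreeGroup (Fin n) →* FreeGroup (Fin n))
    (hφ : ∀ i : Fin n, (i : ℕ) < n - 1 → φ (FreeGroup.of i) = FreeGroup.of i) :
    IsInert φ.range :=
  oneGenEndo_image_inert_general ⟨Fin n, .ofFreeGroup _, {i | n - 1 ≤ i},
    fun i hi j hj => by grind, fun i hi => hφ i (not_le.1 hi)⟩
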